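/- Let p be a prime with p > h, and let λ ∈ X⁺ ∩ C̄_ℤ be weakly p-linked to 0, say λ = w·0 + pσ with w ∈ W and σ ∈ X. Then σ is dominant and (σ, α₀∨) ∈ {0,1}; that is, σ is either zero or a minuscule dominant weight. Moreover, if (σ, α₀∨) = 0 then λ = 0, w = 1, and σ = 0. -/

import Mathlib

/-!
Write `λ + ρ = wρ + pσ`.  For a positive root `β` the closed alcove gives `0 ≤ (λ+ρ, β∨) ≤ p`,
while `(wρ, β∨) = (ρ, (w⁻¹β)∨)` has absolute value at most `(ρ, α₀∨) = h - 1 < p`.  Hence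
`-p < p (σ, β∨) < 2p`, and the integer `(σ, β∨)` is `0` or `1`.  This yields dominance of `σ` and
the two possible values of `(σ, α₀∨)`.

The bound rests on `pair_le_highest`: a dominant vector `x` satisfies `(x, β∨) ≤ (x, α₀∨)` for
every root `β`.  For short `β` this is maximality of `α₀`.  A longer `β` is a sum of two short
roots, because by irreducibility some short root `γ` has `(γ, β) > 0`, and then `(γ, β∨) = 1` and
`(β, β) ≥ 2 (γ, γ)`.

If `(σ, α₀∨) = 0`, then `pair_le_highest` applied to `σ` shows that `σ` is orthogonal to all roots,
so `σ = 0` and `λ + ρ = wρ`.  Comparing norms, `(λ,λ) + 2 (λ,ρ) = 0`, and `(λ,ρ) ≥ 0` forces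
`λ = 0`.  Now `w` fixes `ρ`, hence preserves the set of positive roots (those with `(ρ, β) > 0`),
and the exchange condition for words in simple reflections gives `w = 1`.
-/

open scoped RealInnerProductSpace

namespace PaperDNN

variable {E : Type*} [NormedAddCommGroup E] [InnerProductSpace ℝ E]

/-- The coroot pairing `⟨x, α∨⟩ = 2⟪x,α⟫/⟪α,α⟫`. -/
noncomputable def pair (x a : E) : ℝ := 2 * ⟪x, a⟫ / ⟪a, a⟫

/-- `Φ` is a reduced irreducible root system in the Euclidean space `E`. -/
structure IsRootSystem (Φ : Finset E) : Prop where
  nonempty : Φ.Nonempty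
  ne_zero : ∀ α ∈ Φ, α ≠ 0
  span_top : Submodule.span ℝ (Φ : Set E) = ⊤
  reduced : ∀ α ∈ Φ, ∀ t : ℝ, t • α ∈ Φ → t = 1 ∨ t = -1
  reflect_mem : ∀ α ∈ Φ, ∀ β ∈ Φ, β - pair β α • α ∈ Φ
  pair_int : ∀ α ∈ Φ, ∀ β ∈ Φ, ∃ n : ℤ, pair β α = (n : ℝ)
  irred : ∀ S T : Set E, S ∪ T = (Φ : Set E) → S.Nonempty → T.Nonempty →
      (∀ a ∈ S, ∀ b ∈ T, ⟪a, b⟫ = 0) → False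

/-- `Δ` is a base of simple roots for `Φ`: every root is a nonnegative or
nonpositive integral combination of the simple roots. -/
structure IsBase (Φ Δ : Finset E) : Prop where
  subset : Δ ⊆ Φ
  indep : LinearIndependent ℝ (fun a : {x // x ∈ Δ} => (a : E))
  root_decomp : ∀ β ∈ Φ, (∃ c : E → ℕ, β = ∑ α ∈ Δ, (c α : ℝ) • α) ∨
      (∃ c : E → ℕ, β = -(∑ α ∈ Δ, (c α : ℝ) • α))

open Classical in
/-- The positive roots `Φ⁺` of `Φ` with respect to the base `Δ`. -/
noncomputable def posRoots (Φ Δ : Finset E) : Finset E :=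
  Φ.filter fun β => ∃ c : E → ℕ, β = ∑ α ∈ Δ, (c α : ℝ) • α

/-- `ρ`, one-half the sum of the positive roots. -/
noncomputable def rho (Φ Δ : Finset E) : E := (2⁻¹ : ℝ) • ∑ β ∈ posRoots Φ Δ, β

/-- The Weyl group of `Φ`, the subgroup of `GL(E)` generated by the reflections
`s_α : x ↦ x − ⟨x,α∨⟩α` in the roots `α ∈ Φ`.  Applied to a subset `J` of the
simple roots it yields the parabolic subgroup `W_J`. -/
def Weyl (Φ : Finset E) : Subgroup (E ≃ₗ[ℝ] E) :=
  Subgroup.closure { w : E ≃ₗ[ℝ] E | ∃ α ∈ Φ, ∀ x, w x = x - pair x α • α }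

/-- The dot action `w·λ = w(λ+ρ) − ρ`. -/
noncomputable def dotAct (Φ Δ : Finset E) (w : E ≃ₗ[ℝ] E) (lam : E) : E :=
  w (lam + rho Φ Δ) - rho Φ Δ

/-- The weight lattice `X = {λ ∈ E : ⟨λ,α∨⟩ ∈ ℤ for all α ∈ Φ}`. -/
def weightLattice (Φ : Finset E) : Set E :=
  { lam | ∀ α ∈ Φ, ∃ n : ℤ, pair lam α = (n : ℝ) }

/-- The root lattice `ℤΦ`. -/
def rootLattice (Φ : Finset E) : AddSubgroup E := AddSubgroup.closure (Φ : Set E)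

/-- The bottom `p`-alcove `C_ℤ = {λ ∈ X : 0 < ⟨λ+ρ,β∨⟩ < p for all β ∈ Φ⁺}`. -/
def bottomAlcove (Φ Δ : Finset E) (p : ℕ) : Set E :=
  { lam ∈ weightLattice Φ | ∀ β ∈ posRoots Φ Δ,
      0 < pair (lam + rho Φ Δ) β ∧ pair (lam + rho Φ Δ) β < (p : ℝ) }

/-- The closure `C̄_ℤ = {λ ∈ X : 0 ≤ ⟨λ+ρ,β∨⟩ ≤ p for all β ∈ Φ⁺}` of the
bottom `p`-alcove. -/
def closedAlcove (Φ Δ : Finset E) (p : ℕ) : Set E :=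
  { lam ∈ weightLattice Φ | ∀ β ∈ posRoots Φ Δ,
      0 ≤ pair (lam + rho Φ Δ) β ∧ pair (lam + rho Φ Δ) β ≤ (p : ℝ) }

/-- Membership in `X⁺`, the set of dominant weights. -/
def isDominant (Φ Δ : Finset E) (lam : E) : Prop :=
  lam ∈ weightLattice Φ ∧ ∀ α ∈ Δ, 0 ≤ pair lam α

/-- `a₀` is the highest short root of `Φ`: a root of minimal length such that
every root of the same length is `≤ a₀` (their difference is a nonnegative
integral combination of simple roots). -/
structure IsHighestShortRoot (Φ Δ : Finset E) (a₀ : E) : Prop where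
  mem : a₀ ∈ Φ
  short : ∀ β ∈ Φ, ⟪a₀, a₀⟫ ≤ ⟪β, β⟫
  highest : ∀ β ∈ Φ, ⟪β, β⟫ = ⟪a₀, a₀⟫ →
      ∃ c : E → ℕ, a₀ - β = ∑ α ∈ Δ, (c α : ℝ) • α


/-! ### Reflections and the Weyl group -/

lemma pair_add (x y a : E) : pair (x + y) a = pair x a + pair y a := by
  unfold pair; rw [inner_add_left]; ring

lemma pair_smul (t : ℝ) (x a : E) : pair (t • x) a = t * pair x a := by
  unfold pair; rw [real_inner_smul_left]; ring

lemma pair_neg_right (x a : E) : pair x (-a) = -pair x a := by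
  unfold pair; rw [inner_neg_right, inner_neg_neg]; ring

lemma pair_mul_inner (x : E) {a : E} (ha : a ≠ 0) : pair x a * ⟪a, a⟫ = 2 * ⟪x, a⟫ := by
  have h0 : ⟪a, a⟫ ≠ 0 := inner_self_ne_zero.2 ha
  unfold pair; field_simp

lemma pair_self {a : E} (ha : a ≠ 0) : pair a a = 2 := by
  have h0 : ⟪a, a⟫ ≠ 0 := inner_self_ne_zero.2 ha
  unfold pair; field_simp

lemma inner_self_pos' {a : E} (ha : a ≠ 0) : 0 < ⟪a, a⟫ := real_inner_self_pos.2 ha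

lemma pair_nonneg_iff (x : E) {a : E} (ha : a ≠ 0) : 0 ≤ pair x a ↔ 0 ≤ ⟪x, a⟫ := by
  have h0 := inner_self_pos' ha
  have h1 := pair_mul_inner x ha
  constructor
  · intro h; nlinarith
  · intro h
    unfold pair; positivity

/-- The reflection `x ↦ x − ⟨x,a∨⟩a` as a linear automorphism.  For `a = 0` it is the identity. -/
noncomputable def srefl (a : E) : E ≃ₗ[ℝ] E :=
  LinearEquiv.ofInvolutive
    { toFun := fun x => x - pair x a • a
      map_add' := fun x y => by rw [pair_add, add_smul]; abel
      map_smul' := fun t x => by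
        simp only [pair_smul, RingHom.id_apply, smul_sub, smul_smul] }
    (by
      intro x
      by_cases ha : a = 0
      · simp [ha]
      · have h1 : pair (x - pair x a • a) a = - pair x a := by
          rw [sub_eq_add_neg, ← neg_smul, pair_add, pair_smul, pair_self ha]; ring
        change (x - pair x a • a) - pair (x - pair x a • a) a • a = x
        rw [h1, neg_smul]; abel)

lemma srefl_apply (a x : E) : srefl a x = x - pair x a • a := rfl

lemma srefl_srefl (a x : E) : srefl a (srefl a x) = x :=
  (srefl a).left_inv x

lemma srefl_mul_self (a : E) : srefl a * srefl a = 1 := by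
  ext x; exact srefl_srefl a x

lemma srefl_self {a : E} (ha : a ≠ 0) : srefl a a = -a := by
  rw [srefl_apply, pair_self ha, two_smul]; abel

lemma inner_srefl (a x y : E) : ⟪srefl a x, srefl a y⟫ = ⟪x, y⟫ := by
  by_cases ha : a = 0
  · simp [srefl_apply, ha]
  · have hx := pair_mul_inner x ha
    have hy := pair_mul_inner y ha
    simp only [srefl_apply, inner_sub_left, inner_sub_right, real_inner_smul_left,
      real_inner_smul_right]
    rw [real_inner_comm y a]
    linear_combination (1 / 2 : ℝ) * pair y a * hx + (1 / 2 : ℝ) * pair x a * hy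

/-- An isometry conjugates the reflection in `a` to the reflection in its image. -/
lemma conj_srefl (w : E ≃ₗ[ℝ] E) (hw : ∀ x y, ⟪w x, w y⟫ = ⟪x, y⟫) (a : E) :
    w * srefl a = srefl (w a) * w := by
  ext x
  simp only [LinearEquiv.mul_apply, srefl_apply, map_sub, map_smul, pair, hw]

lemma weyl_inner {Φ : Finset E} {w : E ≃ₗ[ℝ] E} (hw : w ∈ Weyl Φ) :
    ∀ x y, ⟪w x, w y⟫ = ⟪x, y⟫ := by
  unfold Weyl at hw
  induction hw using Subgroup.closure_induction with
  | mem w h =>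
    obtain ⟨a, -, ha⟩ := h
    intro x y
    rw [ha, ha, ← srefl_apply, ← srefl_apply, inner_srefl]
  | one => intro x y; rfl
  | mul u v _ _ hu hv => intro x y; rw [LinearEquiv.mul_apply, LinearEquiv.mul_apply, hu, hv]
  | inv u _ hu =>
    intro x y
    have := hu (u⁻¹ x) (u⁻¹ y)
    rw [← LinearEquiv.mul_apply, ← LinearEquiv.mul_apply, mul_inv_cancel] at this
    exact this.symm

lemma weyl_mem_iff {Φ : Finset E} (hΦ : IsRootSystem Φ) {w : E ≃ₗ[ℝ] E} (hw : w ∈ Weyl Φ) :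
    ∀ β, w β ∈ Φ ↔ β ∈ Φ := by
  unfold Weyl at hw
  induction hw using Subgroup.closure_induction with
  | mem w h =>
    obtain ⟨a, haΦ, ha⟩ := h
    intro β
    rw [ha]
    refine ⟨fun h => ?_, fun h => hΦ.reflect_mem a haΦ β h⟩
    have h2 := hΦ.reflect_mem a haΦ _ h
    rwa [← srefl_apply, ← srefl_apply, srefl_srefl] at h2
  | one => intro β; rfl
  | mul u v _ _ hu hv => intro β; rw [LinearEquiv.mul_apply, hu, hv]
  | inv u _ hu =>
    intro β
    rw [← hu, ← LinearEquiv.mul_apply, mul_inv_cancel]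
    rfl

/-! ### Positive roots -/

lemma neg_mem {Φ : Finset E} (hΦ : IsRootSystem Φ) {β : E} (hβ : β ∈ Φ) : -β ∈ Φ := by
  have := hΦ.reflect_mem β hβ β hβ
  rwa [← srefl_apply, srefl_self (hΦ.ne_zero β hβ)] at this

lemma srefl_mem_weyl {Φ : Finset E} {a : E} (ha : a ∈ Φ) : srefl a ∈ Weyl Φ :=
  Subgroup.subset_closure ⟨a, ha, fun x => srefl_apply a x⟩

lemma mem_posRoots {Φ Δ : Finset E} {β : E} :
    β ∈ posRoots Φ Δ ↔ β ∈ Φ ∧ ∃ c : E → ℕ, β = ∑ α ∈ Δ, (c α : ℝ) • α := by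
  classical
  simp [posRoots]

lemma span_base {Φ Δ : Finset E} (hΦ : IsRootSystem Φ) (hΔ : IsBase Φ Δ) :
    Submodule.span ℝ (Set.range (fun a : {x // x ∈ Δ} => (a : E))) = ⊤ := by
  rw [eq_top_iff, ← hΦ.span_top, Submodule.span_le]
  have key : ∀ c : E → ℕ, ∑ α ∈ Δ, (c α : ℝ) • α ∈
      Submodule.span ℝ (Set.range (fun a : {x // x ∈ Δ} => (a : E))) := fun c =>
    Submodule.sum_mem _ fun α hα =>
      Submodule.smul_mem _ _ (Submodule.subset_span ⟨⟨α, hα⟩, rfl⟩)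
  intro β hβ
  rcases hΔ.root_decomp β hβ with ⟨c, hc⟩ | ⟨c, hc⟩
  · rw [hc]; exact key c
  · rw [hc]; exact Submodule.neg_mem _ (key c)

/-- Linear functionals can be prescribed arbitrarily on the base. -/
lemma exists_functional {Φ Δ : Finset E} (hΦ : IsRootSystem Φ) (hΔ : IsBase Φ Δ) (g : E → ℝ) :
    ∃ f : E →ₗ[ℝ] ℝ, ∀ α ∈ Δ, f α = g α := by
  let b := Module.Basis.mk hΔ.indep (span_base hΦ hΔ).ge
  refine ⟨b.constr ℝ (fun a : {x // x ∈ Δ} => g a), fun α hα => ?_⟩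
  have h1 := b.constr_basis ℝ (fun a : {x // x ∈ Δ} => g a) ⟨α, hα⟩
  have h2 : b ⟨α, hα⟩ = α := by simp [b]
  rwa [h2] at h1

lemma functional_sum {Δ : Finset E} {f : E →ₗ[ℝ] ℝ} {g : E → ℝ} (hf : ∀ α ∈ Δ, f α = g α)
    (c : E → ℕ) : f (∑ α ∈ Δ, (c α : ℝ) • α) = ∑ α ∈ Δ, (c α : ℝ) * g α := by
  rw [map_sum]
  refine Finset.sum_congr rfl fun α hα => ?_
  rw [map_smul, hf α hα, smul_eq_mul]

lemma base_subset_pos {Φ Δ : Finset E} (hΔ : IsBase Φ Δ) {α : E} (hα : α ∈ Δ) :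
    α ∈ posRoots Φ Δ := by
  classical
  refine mem_posRoots.2 ⟨hΔ.subset hα, fun x => if x = α then 1 else 0, ?_⟩
  simp [hα]

lemma pos_or_neg {Φ Δ : Finset E} (hΦ : IsRootSystem Φ) (hΔ : IsBase Φ Δ) {β : E} (hβ : β ∈ Φ) :
    β ∈ posRoots Φ Δ ∨ -β ∈ posRoots Φ Δ := by
  rcases hΔ.root_decomp β hβ with ⟨c, hc⟩ | ⟨c, hc⟩
  · exact Or.inl (mem_posRoots.2 ⟨hβ, c, hc⟩)
  · exact Or.inr (mem_posRoots.2 ⟨neg_mem hΦ hβ, c, by rw [hc, neg_neg]⟩)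

/-- If a nonnegative combination of simple roots has a nonnegative combination as its negative,
all coefficients vanish. -/
lemma coeff_eq_zero {Φ Δ : Finset E} (hΦ : IsRootSystem Φ) (hΔ : IsBase Φ Δ) {c d : E → ℕ}
    (h : ∑ α ∈ Δ, (c α : ℝ) • α = -∑ α ∈ Δ, (d α : ℝ) • α) {γ : E} (hγ : γ ∈ Δ) : c γ = 0 := by
  classical
  obtain ⟨f, hf⟩ := exists_functional hΦ hΔ (fun x => if x = γ then 1 else 0)
  have h1 := congrArg f h
  rw [map_neg, functional_sum hf, functional_sum hf] at h1
  simp only [mul_ite, mul_one, mul_zero, Finset.sum_ite_eq', hγ, if_true] at h1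
  have h2 : (c γ : ℝ) + d γ = 0 := by rw [h1]; ring
  norm_cast at h2
  omega

lemma not_pos_and_neg {Φ Δ : Finset E} (hΦ : IsRootSystem Φ) (hΔ : IsBase Φ Δ) {β : E}
    (h1 : β ∈ posRoots Φ Δ) (h2 : -β ∈ posRoots Φ Δ) : False := by
  obtain ⟨hβ, c, hc⟩ := mem_posRoots.1 h1
  obtain ⟨-, d, hd⟩ := mem_posRoots.1 h2
  have h3 : ∑ α ∈ Δ, (c α : ℝ) • α = -∑ α ∈ Δ, (d α : ℝ) • α := by rw [← hc, ← hd, neg_neg]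
  refine hΦ.ne_zero β hβ ?_
  rw [hc]
  exact Finset.sum_eq_zero fun α hα => by rw [coeff_eq_zero hΦ hΔ h3 hα]; simp

/-- A simple reflection permutes the positive roots other than its own root. -/
lemma srefl_pos {Φ Δ : Finset E} (hΦ : IsRootSystem Φ) (hΔ : IsBase Φ Δ) {α β : E}
    (hα : α ∈ Δ) (hβ : β ∈ posRoots Φ Δ) (hne : β ≠ α) : srefl α β ∈ posRoots Φ Δ := by
  classical
  obtain ⟨hβΦ, c, hc⟩ := mem_posRoots.1 hβ
  have hmem : srefl α β ∈ Φ := hΦ.reflect_mem α (hΔ.subset hα) β hβΦ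
  rcases pos_or_neg hΦ hΔ hmem with h | h
  · exact h
  exfalso
  obtain ⟨-, d, hd⟩ := mem_posRoots.1 h
  -- comparing coefficients away from `α` shows that `β` is a multiple of `α`
  have hzero : ∀ γ ∈ Δ, γ ≠ α → c γ = 0 := by
    intro γ hγ hγα
    obtain ⟨f, hf⟩ := exists_functional hΦ hΔ (fun x => if x = γ then 1 else 0)
    have hfα : f α = 0 := by rw [hf α hα, if_neg (Ne.symm hγα)]
    have h1 := congrArg f hd
    have h3 := congrArg f hc
    rw [functional_sum hf] at h1 h3
    simp only [mul_ite, mul_one, mul_zero, Finset.sum_ite_eq', hγ, if_true] at h1 h3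
    rw [srefl_apply, map_neg, map_sub, map_smul, hfα, h3] at h1
    have h2 : (c γ : ℝ) + d γ = 0 := by rw [← h1]; simp
    norm_cast at h2
    omega
  have hβ' : β = (c α : ℝ) • α := by
    rw [hc]
    exact Finset.sum_eq_single α (fun γ hγ hγα => by rw [hzero γ hγ hγα]; simp)
      (fun h => absurd hα h)
  rcases hΦ.reduced α (hΔ.subset hα) (c α) (hβ' ▸ hβΦ) with h1 | h1
  · rw [h1, one_smul] at hβ'; exact hne hβ'
  · have : (0 : ℝ) ≤ (c α : ℝ) := Nat.cast_nonneg _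
    linarith

lemma inner_nonneg_of_dominant {Φ Δ : Finset E} {x β : E} (hx : ∀ α ∈ Δ, 0 ≤ ⟪x, α⟫)
    (hβ : β ∈ posRoots Φ Δ) : 0 ≤ ⟪x, β⟫ := by
  obtain ⟨-, c, hc⟩ := mem_posRoots.1 hβ
  rw [hc, inner_sum]
  refine Finset.sum_nonneg fun α hα => ?_
  rw [real_inner_smul_right]
  exact mul_nonneg (Nat.cast_nonneg _) (hx α hα)

/-! ### The vector `ρ` -/

lemma pair_sum {ι : Type*} (s : Finset ι) (f : ι → E) (a : E) :
    pair (∑ i ∈ s, f i) a = ∑ i ∈ s, pair (f i) a := by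
  unfold pair
  rw [sum_inner, Finset.mul_sum, Finset.sum_div]

lemma pair_rho_simple {Φ Δ : Finset E} (hΦ : IsRootSystem Φ) (hΔ : IsBase Φ Δ) {α : E}
    (hα : α ∈ Δ) : pair (rho Φ Δ) α = 1 := by
  classical
  have hα0 : α ≠ 0 := hΦ.ne_zero α (hΔ.subset hα)
  have hmap : ∀ β ∈ (posRoots Φ Δ).erase α, srefl α β ∈ (posRoots Φ Δ).erase α := by
    intro β hβ
    obtain ⟨h1, h2⟩ := Finset.mem_erase.1 hβ
    refine Finset.mem_erase.2 ⟨fun h3 => ?_, srefl_pos hΦ hΔ hα h2 h1⟩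
    have h4 : β = -α := by rw [← srefl_srefl α β, h3, srefl_self hα0]
    exact not_pos_and_neg hΦ hΔ (base_subset_pos hΔ hα) (h4 ▸ h2)
  have hneg : ∀ β, pair (srefl α β) α = -pair β α := by
    intro β
    rw [srefl_apply, sub_eq_add_neg, ← neg_smul, pair_add, pair_smul, pair_self hα0]; ring
  have hsum : ∑ β ∈ (posRoots Φ Δ).erase α, pair β α
      = ∑ β ∈ (posRoots Φ Δ).erase α, -pair β α :=
    Finset.sum_bij' (fun β _ => srefl α β) (fun β _ => srefl α β) hmap hmap
      (fun β _ => srefl_srefl α β) (fun β _ => srefl_srefl α β)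
      (fun β _ => by rw [hneg, neg_neg])
  rw [Finset.sum_neg_distrib] at hsum
  rw [rho, pair_smul, pair_sum, ← Finset.add_sum_erase _ _ (base_subset_pos hΔ hα),
    pair_self hα0]
  linarith

lemma rho_inner_simple_pos {Φ Δ : Finset E} (hΦ : IsRootSystem Φ) (hΔ : IsBase Φ Δ) {α : E}
    (hα : α ∈ Δ) : 0 < ⟪rho Φ Δ, α⟫ := by
  have hα0 : α ≠ 0 := hΦ.ne_zero α (hΔ.subset hα)
  have h1 := pair_mul_inner (rho Φ Δ) hα0
  rw [pair_rho_simple hΦ hΔ hα] at h1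
  have := inner_self_pos' hα0
  linarith

lemma rho_inner_pos {Φ Δ : Finset E} (hΦ : IsRootSystem Φ) (hΔ : IsBase Φ Δ) {β : E}
    (hβ : β ∈ posRoots Φ Δ) : 0 < ⟪rho Φ Δ, β⟫ := by
  refine lt_of_le_of_ne
    (inner_nonneg_of_dominant (fun α hα => (rho_inner_simple_pos hΦ hΔ hα).le) hβ) fun h0 => ?_
  obtain ⟨hβΦ, c, hc⟩ := mem_posRoots.1 hβ
  refine hΦ.ne_zero β hβΦ ?_
  have h1 : ∑ α ∈ Δ, (c α : ℝ) * ⟪rho Φ Δ, α⟫ = 0 := by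
    rw [h0]; conv_rhs => rw [hc, inner_sum]
    simp only [real_inner_smul_right]
  have h2 := (Finset.sum_eq_zero_iff_of_nonneg fun α hα =>
    mul_nonneg (Nat.cast_nonneg _) (rho_inner_simple_pos hΦ hΔ hα).le).1 h1
  rw [hc]
  refine Finset.sum_eq_zero fun α hα => ?_
  rcases mul_eq_zero.1 (h2 α hα) with h3 | h3
  · rw [h3, zero_smul]
  · exact absurd h3 (rho_inner_simple_pos hΦ hΔ hα).ne'

/-- Positivity of a root is detected by the sign of its inner product with `ρ`. -/
lemma mem_pos_iff {Φ Δ : Finset E} (hΦ : IsRootSystem Φ) (hΔ : IsBase Φ Δ) {β : E} (hβ : β ∈ Φ) :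
    β ∈ posRoots Φ Δ ↔ 0 < ⟪rho Φ Δ, β⟫ := by
  refine ⟨rho_inner_pos hΦ hΔ, fun h => (pos_or_neg hΦ hΔ hβ).resolve_right fun h' => ?_⟩
  have := rho_inner_pos hΦ hΔ h'
  rw [inner_neg_right] at this
  linarith

/-! ### The highest short root gives the highest coroot -/

lemma highest_pos {Φ Δ : Finset E} (hΦ : IsRootSystem Φ) (hΔ : IsBase Φ Δ) {a₀ : E}
    (ha₀ : IsHighestShortRoot Φ Δ a₀) : a₀ ∈ posRoots Φ Δ := by
  refine (mem_pos_iff hΦ hΔ ha₀.mem).2 ?_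
  obtain ⟨c, hc⟩ := ha₀.highest (-a₀) (neg_mem hΦ ha₀.mem) (inner_neg_neg _ _)
  have h1 : 0 ≤ ⟪rho Φ Δ, a₀ - -a₀⟫ := by
    rw [hc, inner_sum]
    refine Finset.sum_nonneg fun α hα => ?_
    rw [real_inner_smul_right]
    exact mul_nonneg (Nat.cast_nonneg _) (rho_inner_simple_pos hΦ hΔ hα).le
  rw [sub_neg_eq_add, inner_add_right] at h1
  rcases pos_or_neg hΦ hΔ ha₀.mem with h | h
  · exact rho_inner_pos hΦ hΔ h
  · have := rho_inner_pos hΦ hΔ h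
    rw [inner_neg_right] at this
    linarith

lemma inner_le_highest {Φ Δ : Finset E} {a₀ : E} (ha₀ : IsHighestShortRoot Φ Δ a₀) {x : E}
    (hx : ∀ α ∈ Δ, 0 ≤ ⟪x, α⟫) {β : E} (hβ : β ∈ Φ) (hs : ⟪β, β⟫ = ⟪a₀, a₀⟫) :
    ⟪x, β⟫ ≤ ⟪x, a₀⟫ := by
  obtain ⟨c, hc⟩ := ha₀.highest β hβ hs
  have h1 : 0 ≤ ⟪x, a₀ - β⟫ := by
    rw [hc, inner_sum]
    refine Finset.sum_nonneg fun α hα => ?_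
    rw [real_inner_smul_right]
    exact mul_nonneg (Nat.cast_nonneg _) (hx α hα)
  rw [inner_sub_right] at h1
  linarith

/-- By irreducibility, no root is orthogonal to all short roots: the roots orthogonal to all short
roots are orthogonal to all the other roots. -/
lemma exists_short_inner_pos {Φ Δ : Finset E} (hΦ : IsRootSystem Φ) {a₀ : E}
    (ha₀ : IsHighestShortRoot Φ Δ a₀) {β : E} (hβ : β ∈ Φ) :
    ∃ γ ∈ Φ, ⟪γ, γ⟫ = ⟪a₀, a₀⟫ ∧ 0 < ⟪γ, β⟫ := by
  have key : ∃ γ ∈ Φ, ⟪γ, γ⟫ = ⟪a₀, a₀⟫ ∧ ⟪γ, β⟫ ≠ 0 := by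
    by_contra hcon
    let P : E → Prop := fun b => ∃ γ ∈ Φ, ⟪γ, γ⟫ = ⟪a₀, a₀⟫ ∧ ⟪γ, b⟫ ≠ 0
    refine hΦ.irred {b | b ∈ Φ ∧ P b} {b | b ∈ Φ ∧ ¬ P b} ?_ ⟨a₀, ha₀.mem, a₀, ha₀.mem, rfl, ?_⟩
      ⟨β, hβ, hcon⟩ ?_
    · ext b
      change (b ∈ Φ ∧ P b) ∨ (b ∈ Φ ∧ ¬ P b) ↔ b ∈ Φ
      rw [← and_or_left, and_iff_left (em (P b))]
    · exact inner_self_ne_zero.2 (hΦ.ne_zero _ ha₀.mem)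
    · rintro b ⟨hb, γ, hγ, hγs, hγb⟩ t ⟨-, ht⟩
      have hort : ∀ δ ∈ Φ, ⟪δ, δ⟫ = ⟪a₀, a₀⟫ → ⟪δ, t⟫ = 0 := by
        intro δ hδ hδs
        by_contra hne
        exact ht ⟨δ, hδ, hδs, hne⟩
      have h1 := hort γ hγ hγs
      have h2 := hort (srefl b γ) (hΦ.reflect_mem b hb γ hγ) (by rw [inner_srefl, hγs])
      rw [srefl_apply, inner_sub_left, h1, real_inner_smul_left, zero_sub, neg_eq_zero] at h2
      refine (mul_eq_zero.1 h2).resolve_left fun h3 => hγb ?_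
      have h4 := pair_mul_inner γ (hΦ.ne_zero b hb)
      rw [h3] at h4
      linarith
  obtain ⟨γ, hγ, hs, hne⟩ := key
  rcases lt_or_gt_of_ne hne with h | h
  · exact ⟨-γ, neg_mem hΦ hγ, by rw [inner_neg_neg, hs], by rw [inner_neg_left]; linarith⟩
  · exact ⟨γ, hγ, hs, h⟩

/-- The coroot of the highest short root is the highest coroot. -/
lemma pair_le_highest {Φ Δ : Finset E} (hΦ : IsRootSystem Φ) (hΔ : IsBase Φ Δ) {a₀ : E}
    (ha₀ : IsHighestShortRoot Φ Δ a₀) {x : E} (hx : ∀ α ∈ Δ, 0 ≤ ⟪x, α⟫) {β : E} (hβ : β ∈ Φ) :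
    pair x β ≤ pair x a₀ := by
  have hA : 0 < ⟪a₀, a₀⟫ := inner_self_pos' (hΦ.ne_zero _ ha₀.mem)
  have hxa : 0 ≤ ⟪x, a₀⟫ := inner_nonneg_of_dominant hx (highest_pos hΦ hΔ ha₀)
  rcases (ha₀.short β hβ).eq_or_lt with hs | hlong
  · have := inner_le_highest ha₀ hx hβ hs.symm
    unfold pair
    rw [← hs]
    gcongr
  · obtain ⟨γ, hγ, hγs, hpos⟩ := exists_short_inner_pos hΦ ha₀ hβ
    have hβ0 := hΦ.ne_zero β hβ
    have hγ0 := hΦ.ne_zero γ hγ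
    have hB : 0 < ⟪β, β⟫ := inner_self_pos' hβ0
    obtain ⟨m, hm⟩ := hΦ.pair_int γ hγ β hβ
    obtain ⟨n, hn⟩ := hΦ.pair_int β hβ γ hγ
    have e1 := pair_mul_inner β hγ0
    have e2 := pair_mul_inner γ hβ0
    rw [hm, hγs, real_inner_comm γ β] at e1
    rw [hn] at e2
    have hn0 : (0 : ℝ) < n := by
      by_contra hcon
      nlinarith
    have hmn : (n : ℝ) < m := by
      by_contra hcon
      nlinarith
    -- Cauchy–Schwarz bounds the product of the two Cartan integers by `4`
    have hcs : (m : ℝ) * n ≤ 4 := by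
      have h1 := real_inner_mul_inner_self_le γ β
      rw [hγs] at h1
      have h2 : ((m : ℝ) * n) * (⟪a₀, a₀⟫ * ⟪β, β⟫) = 4 * (⟪γ, β⟫ * ⟪γ, β⟫) := by
        linear_combination (n * ⟪β, β⟫) * e1 + 2 * ⟪γ, β⟫ * e2
      have h3 : 0 < ⟪a₀, a₀⟫ * ⟪β, β⟫ := mul_pos hA hB
      by_contra hcon
      nlinarith
    have hn1 : n = 1 := by
      have i0 : 0 < n := by exact_mod_cast hn0
      have i1 : n < m := by exact_mod_cast hmn
      have i2 : m * n ≤ 4 := by exact_mod_cast hcs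
      by_contra hne
      have : 2 ≤ n := by omega
      nlinarith
    have hm2 : (2 : ℝ) ≤ m := by
      have i1 : n < m := by exact_mod_cast hmn
      have : 2 ≤ m := by omega
      exact_mod_cast this
    rw [hn1] at hn e2
    have hBA : 2 * ⟪a₀, a₀⟫ ≤ ⟪β, β⟫ := by
      push_cast at e2
      nlinarith
    -- `β = γ + (β - γ)` is a sum of two short roots
    have hδ : srefl β γ = γ - β := by rw [srefl_apply, hn]; simp
    have hδΦ : -(srefl β γ) ∈ Φ := neg_mem hΦ (hΦ.reflect_mem β hβ γ hγ)
    have l1 := inner_le_highest ha₀ hx hγ hγs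
    have l2 := inner_le_highest ha₀ hx hδΦ (by rw [inner_neg_neg, inner_srefl, hγs])
    rw [hδ, inner_neg_right, inner_sub_right] at l2
    unfold pair
    rw [div_le_div_iff₀ hB hA]
    nlinarith [mul_le_mul_of_nonneg_left hBA hxa]

/-! ### Triviality of Weyl group elements preserving positivity -/

/-- The product of the reflections in the members of a list. -/
noncomputable def word (L : List E) : E ≃ₗ[ℝ] E := (L.map srefl).prod

lemma word_cons (a : E) (L : List E) : word (a :: L) = srefl a * word L := by simp [word]

lemma word_append (L M : List E) : word (L ++ M) = word L * word M := by simp [word]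

lemma word_mem {Φ Δ : Finset E} (hΔ : IsBase Φ Δ) {L : List E} (hL : ∀ a ∈ L, a ∈ Δ) :
    word L ∈ Weyl Φ := by
  unfold word
  refine Subgroup.list_prod_mem _ fun s hs => ?_
  obtain ⟨a, ha, rfl⟩ := List.mem_map.1 hs
  exact srefl_mem_weyl (hΔ.subset (hL a ha))

/-- The exchange condition. -/
lemma exchange {Φ Δ : Finset E} (hΦ : IsRootSystem Φ) (hΔ : IsBase Φ Δ) {α : E} (hα : α ∈ Δ) :
    ∀ L : List E, (∀ a ∈ L, a ∈ Δ) → word L α ∉ posRoots Φ Δ →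
      ∃ M : List E, (∀ a ∈ M, a ∈ Δ) ∧ M.length + 1 = L.length ∧ word M = word L * srefl α := by
  intro L
  induction L with
  | nil =>
    intro _ h
    exact absurd (base_subset_pos hΔ hα) h
  | cons b L ih =>
    intro hL h
    have hL' : ∀ a ∈ L, a ∈ Δ := fun a ha => hL a (List.mem_cons_of_mem _ ha)
    have hb : b ∈ Δ := hL b List.mem_cons_self
    by_cases hpos : word L α ∈ posRoots Φ Δ
    -- if the sign changes at `b`, the root reached there is `b` itself and `b` can be deleted
    · have heq : word L α = b := by
        by_contra hne
        refine h ?_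
        rw [word_cons]
        exact srefl_pos hΦ hΔ hb hpos hne
      refine ⟨L, hL', rfl, ?_⟩
      have hc := conj_srefl (word L) (weyl_inner (word_mem hΔ hL')) α
      rw [heq] at hc
      rw [word_cons, ← hc, mul_assoc, srefl_mul_self, mul_one]
    · obtain ⟨M, hM, hlen, hw⟩ := ih hL' hpos
      refine ⟨b :: M, ?_, by simp [hlen], by rw [word_cons, word_cons, hw, mul_assoc]⟩
      intro a ha
      rcases List.mem_cons.1 ha with rfl | ha
      · exact hb
      · exact hM a ha

/-- By the exchange condition, a nonempty word whose product keeps all simple roots positive is equal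
to a word shorter by two letters; so such a product is trivial by induction on the length. -/
lemma word_eq_one {Φ Δ : Finset E} (hΦ : IsRootSystem Φ) (hΔ : IsBase Φ Δ) (n : ℕ) :
    ∀ L : List E, L.length = n → (∀ a ∈ L, a ∈ Δ) →
      (∀ α ∈ Δ, word L α ∈ posRoots Φ Δ) → word L = 1 := by
  induction n using Nat.strong_induction_on with
  | _ n ih =>
    intro L hlen hL hpos
    rcases List.eq_nil_or_concat L with rfl | ⟨L₀, α, rfl⟩
    · simp [word]
    · rw [List.concat_eq_append] at *
      have hα : α ∈ Δ := hL α (by simp)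
      have hL₀ : ∀ a ∈ L₀, a ∈ Δ := fun a ha => hL a (by simp [ha])
      have hw : word (L₀ ++ [α]) = word L₀ * srefl α := by
        rw [word_append]; simp [word]
      have h1 := hpos α hα
      rw [hw, LinearEquiv.mul_apply, srefl_self (hΦ.ne_zero α (hΔ.subset hα)), map_neg] at h1
      obtain ⟨M, hM, hMlen, hMw⟩ := exchange hΦ hΔ hα L₀ hL₀
        (fun h2 => not_pos_and_neg hΦ hΔ h2 h1)
      rw [← hMw] at hw
      rw [hw]
      refine ih M.length ?_ M rfl hM (fun a ha => hw ▸ hpos a ha)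
      simp at hlen
      omega

lemma word_inv (L : List E) : (word L)⁻¹ = word L.reverse := by
  induction L with
  | nil => simp [word]
  | cons a L ih =>
    have ha : (srefl a)⁻¹ = srefl a := inv_eq_of_mul_eq_one_left (srefl_mul_self a)
    rw [word_cons, mul_inv_rev, ih, List.reverse_cons, word_append, ha]
    simp [word]

/-- The reflection in any positive root is a product of simple reflections: a counterexample with
`(ρ, β)` minimal could be lowered by a simple reflection. -/
lemma srefl_eq_word {Φ Δ : Finset E} (hΦ : IsRootSystem Φ) (hΔ : IsBase Φ Δ) {β : E}
    (hβ : β ∈ posRoots Φ Δ) : ∃ L : List E, (∀ a ∈ L, a ∈ Δ) ∧ srefl β = word L := by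
  classical
  by_contra hcon
  let S := (posRoots Φ Δ).filter fun b => ¬ ∃ L : List E, (∀ a ∈ L, a ∈ Δ) ∧ srefl b = word L
  have hS : S.Nonempty := ⟨β, Finset.mem_filter.2 ⟨hβ, hcon⟩⟩
  obtain ⟨b, hbS, hmin⟩ := S.exists_min_image (fun b => ⟪rho Φ Δ, b⟫) hS
  obtain ⟨hb, hbw⟩ := Finset.mem_filter.1 hbS
  obtain ⟨hbΦ, c, hc⟩ := mem_posRoots.1 hb
  have hex : ∃ α ∈ Δ, 0 < ⟪b, α⟫ := by
    by_contra hno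
    push Not at hno
    have h1 : ⟪b, b⟫ ≤ 0 := by
      have h2 : ⟪b, b⟫ = ∑ α ∈ Δ, (c α : ℝ) * ⟪b, α⟫ := by
        conv_lhs => rw [hc, inner_sum, ← hc]
        simp only [real_inner_smul_right]
      rw [h2]
      refine Finset.sum_nonpos fun α hα => ?_
      exact mul_nonpos_of_nonneg_of_nonpos (Nat.cast_nonneg _) (hno α hα)
    exact absurd (inner_self_pos' (hΦ.ne_zero b hbΦ)) (not_lt.2 h1)
  obtain ⟨α, hα, hbα⟩ := hex
  have hα0 := hΦ.ne_zero α (hΔ.subset hα)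
  have hne : b ≠ α := by
    rintro rfl
    exact hbw ⟨[b], by simpa using hα, by simp [word]⟩
  have hpos := srefl_pos hΦ hΔ hα hb hne
  have hlt : ⟪rho Φ Δ, srefl α b⟫ < ⟪rho Φ Δ, b⟫ := by
    rw [srefl_apply, inner_sub_right, real_inner_smul_right]
    have h1 : 0 < pair b α := by
      unfold pair
      have := inner_self_pos' hα0
      positivity
    have := mul_pos h1 (rho_inner_simple_pos hΦ hΔ hα)
    linarith
  have hword : ∃ L : List E, (∀ a ∈ L, a ∈ Δ) ∧ srefl (srefl α b) = word L := by
    by_contra hno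
    exact absurd (hmin _ (Finset.mem_filter.2 ⟨hpos, hno⟩)) (not_le.2 hlt)
  obtain ⟨L, hL, hLw⟩ := hword
  refine hbw ⟨α :: (L ++ [α]), ?_, ?_⟩
  · intro a ha
    simp only [List.mem_cons, List.mem_append, List.not_mem_nil, or_false] at ha
    rcases ha with rfl | ha | rfl
    · exact hα
    · exact hL a ha
    · exact hα
  · have hconj := conj_srefl (srefl α) (inner_srefl α) b
    have h1 : word [α] = srefl α := by simp [word]
    rw [word_cons, word_append, ← hLw, h1, ← hconj, ← mul_assoc, srefl_mul_self, one_mul]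

lemma weyl_eq_word {Φ Δ : Finset E} (hΦ : IsRootSystem Φ) (hΔ : IsBase Φ Δ) {w : E ≃ₗ[ℝ] E}
    (hw : w ∈ Weyl Φ) : ∃ L : List E, (∀ a ∈ L, a ∈ Δ) ∧ w = word L := by
  unfold Weyl at hw
  induction hw using Subgroup.closure_induction with
  | mem w h =>
    obtain ⟨a, ha, haw⟩ := h
    have h1 : w = srefl a := by ext x; rw [haw, srefl_apply]
    have h2 : srefl (-a) = srefl a := by
      ext x; rw [srefl_apply, srefl_apply, pair_neg_right, smul_neg, neg_smul, neg_neg]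
    rw [h1]
    rcases pos_or_neg hΦ hΔ ha with h | h
    · exact srefl_eq_word hΦ hΔ h
    · rw [← h2]; exact srefl_eq_word hΦ hΔ h
  | one => exact ⟨[], by simp, by simp [word]⟩
  | mul u v _ _ hu hv =>
    obtain ⟨L, hL, rfl⟩ := hu
    obtain ⟨M, hM, rfl⟩ := hv
    refine ⟨L ++ M, fun a ha => ?_, (word_append L M).symm⟩
    rcases List.mem_append.1 ha with h | h
    · exact hL a h
    · exact hM a h
  | inv u _ hu =>
    obtain ⟨L, hL, rfl⟩ := hu
    exact ⟨L.reverse, fun a ha => hL a (List.mem_reverse.1 ha), word_inv L⟩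

/-- The stabilizer of `ρ` in the Weyl group is trivial. -/
lemma eq_one_of_fix_rho {Φ Δ : Finset E} (hΦ : IsRootSystem Φ) (hΔ : IsBase Φ Δ) {w : E ≃ₗ[ℝ] E}
    (hw : w ∈ Weyl Φ) (hfix : w (rho Φ Δ) = rho Φ Δ) : w = 1 := by
  have hpos : ∀ α ∈ Δ, w α ∈ posRoots Φ Δ := by
    intro α hα
    rw [mem_pos_iff hΦ hΔ ((weyl_mem_iff hΦ hw α).2 (hΔ.subset hα))]
    have h1 := weyl_inner hw (rho Φ Δ) α
    rw [hfix] at h1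
    rw [h1]
    exact rho_inner_simple_pos hΦ hΔ hα
  obtain ⟨L, hL, rfl⟩ := weyl_eq_word hΦ hΔ hw
  exact word_eq_one hΦ hΔ L.length L rfl hL hpos

/-- `|(wρ, β∨)| ≤ (ρ, α₀∨)` for every Weyl group element `w` and every root `β`. -/
lemma abs_pair_weyl_rho_le {Φ Δ : Finset E} (hΦ : IsRootSystem Φ) (hΔ : IsBase Φ Δ) {a₀ : E}
    (ha₀ : IsHighestShortRoot Φ Δ a₀) {w : E ≃ₗ[ℝ] E} (hw : w ∈ Weyl Φ) {β : E} (hβ : β ∈ Φ) :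
    |pair (w (rho Φ Δ)) β| ≤ pair (rho Φ Δ) a₀ := by
  obtain ⟨γ, rfl⟩ := w.surjective β
  have hγ := (weyl_mem_iff hΦ hw γ).1 hβ
  have h1 : pair (w (rho Φ Δ)) (w γ) = pair (rho Φ Δ) γ := by
    unfold pair; rw [weyl_inner hw, weyl_inner hw]
  have hdom : ∀ α ∈ Δ, 0 ≤ ⟪rho Φ Δ, α⟫ := fun α hα => (rho_inner_simple_pos hΦ hΔ hα).le
  have h2 := pair_le_highest hΦ hΔ ha₀ hdom (neg_mem hΦ hγ)
  rw [pair_neg_right] at h2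
  rw [h1, abs_le]
  exact ⟨by linarith, pair_le_highest hΦ hΔ ha₀ hdom hγ⟩

/-- Let `p` be a prime with `p > h`, and let `λ ∈ X⁺ ∩ C̄_ℤ` be
weakly `p`-linked to `0`, say `λ = w·0 + pσ` with `w ∈ W` and `σ ∈ X`.  Then `σ`
is dominant and `(σ, α₀∨) ∈ {0,1}`; that is, `σ` is either zero or a minuscule
dominant weight.  Moreover, if `(σ, α₀∨) = 0` then `λ = 0`, `w = 1` and `σ = 0`. -/
theorem statement8
    (Φ Δ : Finset E) (hΦ : IsRootSystem Φ) (hΔ : IsBase Φ Δ)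
    (a₀ : E) (ha₀ : IsHighestShortRoot Φ Δ a₀)
    (h : ℕ) (hcox : (h : ℝ) = pair (rho Φ Δ) a₀ + 1)
    (p : ℕ) (hp : p.Prime) (hbig : h < p)
    (lam : E) (hdom : isDominant Φ Δ lam) (halc : lam ∈ closedAlcove Φ Δ p)
    (w : E ≃ₗ[ℝ] E) (hw : w ∈ Weyl Φ) (σ : E) (hσ : σ ∈ weightLattice Φ)
    (hlink : lam = dotAct Φ Δ w 0 + (p : ℝ) • σ) :
    (∀ α ∈ Δ, 0 ≤ pair σ α) ∧ (pair σ a₀ = 0 ∨ pair σ a₀ = 1) ∧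
      (pair σ a₀ = 0 → lam = 0 ∧ w = 1 ∧ σ = 0) := by
  have hlr : lam + rho Φ Δ = w (rho Φ Δ) + (p : ℝ) • σ := by
    rw [hlink, dotAct, zero_add]; abel
  have hσ01 : ∀ β ∈ posRoots Φ Δ, pair σ β = 0 ∨ pair σ β = 1 := by
    intro β hβ
    have hβΦ := (mem_posRoots.1 hβ).1
    obtain ⟨n, hn⟩ := hσ β hβΦ
    obtain ⟨h1, h2⟩ := halc.2 β hβ
    rw [hlr, pair_add, pair_smul, hn] at h1 h2
    have h3 := abs_le.1 (abs_pair_weyl_rho_le hΦ hΔ ha₀ hw hβΦ)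
    have hhp : (h : ℝ) + 1 ≤ p := by exact_mod_cast hbig
    have hp0 : (0 : ℝ) < p := by exact_mod_cast hp.pos
    have h4 : (-1 : ℝ) < n := by
      by_contra hcon
      nlinarith
    have h5 : (n : ℝ) < 2 := by
      by_contra hcon
      nlinarith
    have i4 : -1 < n := by exact_mod_cast h4
    have i5 : n < 2 := by exact_mod_cast h5
    rw [hn]
    obtain rfl | rfl : n = 0 ∨ n = 1 := by omega
    · simp
    · simp
  have hσdom : ∀ α ∈ Δ, 0 ≤ pair σ α := by
    intro α hα
    rcases hσ01 α (base_subset_pos hΔ hα) with h1 | h1 <;> rw [h1]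
    exact zero_le_one
  refine ⟨hσdom, hσ01 a₀ (highest_pos hΦ hΔ ha₀), fun h0 => ?_⟩
  have hσinner : ∀ α ∈ Δ, 0 ≤ ⟪σ, α⟫ := fun α hα =>
    (pair_nonneg_iff σ (hΦ.ne_zero α (hΔ.subset hα))).1 (hσdom α hα)
  have hort : ∀ β ∈ Φ, ⟪σ, β⟫ = 0 := by
    intro β hβ
    have h1 := pair_le_highest hΦ hΔ ha₀ hσinner hβ
    have h2 := pair_le_highest hΦ hΔ ha₀ hσinner (neg_mem hΦ hβ)
    rw [pair_neg_right] at h2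
    have h3 : pair σ β = 0 := by linarith
    have h4 := pair_mul_inner σ (hΦ.ne_zero β hβ)
    rw [h3] at h4
    linarith
  have hσ0 : σ = 0 := by
    have h1 : ∀ x ∈ Submodule.span ℝ (Φ : Set E), ⟪σ, x⟫ = 0 := by
      intro x hx
      induction hx using Submodule.span_induction with
      | mem x hx => exact hort x hx
      | zero => exact inner_zero_right _
      | add x y _ _ hx hy => rw [inner_add_right, hx, hy, add_zero]
      | smul t x _ hx => rw [real_inner_smul_right, hx, mul_zero]
    exact inner_self_eq_zero.1 (h1 σ (hΦ.span_top ▸ Submodule.mem_top))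
  rw [hσ0, smul_zero, add_zero] at hlr
  have hlamdom : ∀ α ∈ Δ, 0 ≤ ⟪lam, α⟫ := fun α hα =>
    (pair_nonneg_iff lam (hΦ.ne_zero α (hΔ.subset hα))).1 (hdom.2 α hα)
  have hlr0 : 0 ≤ ⟪lam, rho Φ Δ⟫ := by
    rw [rho, real_inner_smul_right, inner_sum]
    exact mul_nonneg (by norm_num)
      (Finset.sum_nonneg fun β hβ => inner_nonneg_of_dominant hlamdom hβ)
  have hlam0 : lam = 0 := by
    -- `λ + ρ = wρ` has the same norm as `ρ`
    have h1 := weyl_inner hw (rho Φ Δ) (rho Φ Δ)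
    rw [← hlr, inner_add_left, inner_add_right, inner_add_right,
      real_inner_comm lam (rho Φ Δ)] at h1
    have h2 : 0 ≤ ⟪lam, lam⟫ := real_inner_self_nonneg
    have h3 : ⟪lam, lam⟫ = 0 := by linarith
    exact inner_self_eq_zero.1 h3
  refine ⟨hlam0, eq_one_of_fix_rho hΦ hΔ hw ?_, hσ0⟩
  rw [← hlr, hlam0, zero_add]

end PaperDNN
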